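/- Let ρ₀ ∈ (0,1) be a constant and let X = (X_1,…,X_n) be a centered Gaussian random vector in ℝ^n with var(X_i) = 1 for all i and whose correlation matrix R satisfies R_{ij} ≤ ρ₀ for all i ≠ j. Then there is a universal constant c₀ > 0 such that E[max_{1≤i≤n} X_i] ≥ √(2(1−ρ₀)log n) − c₀ √(log log(max{n,3})). -/

import Mathlib

open MeasureTheory ProbabilityTheory Real

/-- `X` is a centered Gaussian random vector with standardized entries and
correlation (= covariance) matrix `R`: every linear combination of the
coordinates is a centered real Gaussian with the corresponding variance,
and `R` has unit diagonal. -/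
def IsCenteredGaussianVec {Ω : Type*} [MeasureSpace Ω] {n : ℕ}
    (X : Fin n → Ω → ℝ) (R : Matrix (Fin n) (Fin n) ℝ) : Prop :=
  (∀ i, Measurable (X i)) ∧ (∀ i, R i i = 1) ∧
    ∀ a : Fin n → ℝ,
      Measure.map (fun ω => ∑ i, a i * X i ω) (ℙ : Measure Ω) =
        gaussianReal 0 (Real.toNNReal (∑ i, ∑ j, a i * R i j * a j))

/-!
Write `s = 1 - ρ₀`. The increments of `X` satisfy `Var[X i - X j] = 2 - 2 R i j ≥ 2 s`, which is the
increment variance of `√s • Z` for independent standard Gaussians `Z i`. By the Sudakov–Fernique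
inequality, `E[max X] ≥ √s * E[max Z]`.

For Sudakov–Fernique, take `X` and `Y` independent and let `W θ = cos θ • X + sin θ • Y`. Gaussian
integration by parts, applied to the log-sum-exp function, gives
`d/dθ E[log ∑ i, exp (W θ i)] =
  sin θ cos θ / 2 * E[∑ i, ∑ j, p i * p j * (Var[Y i - Y j] - Var[X i - X j])]`,
where `p` is the softmax of `W θ`. Hence the order of the increment variances decides the sign of
the derivative. Rescaling `X` and `Y` by `β → ∞` replaces log-sum-exp by the maximum.

For independent standard Gaussians, some `Z i` exceeds a level `u` with probability
`1 - (1 - q) ^ n`, where `q = P(Z i ≥ u)` is of order at least `exp (-(u + 1) ^ 2 / 2)`. The level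
`u = √(2 (log n - log log n)) - 1` makes the loss `u * (1 - q) ^ n` bounded.
-/

section GaussianIntegrationByParts

open scoped NNReal

lemma hasDerivAt_gaussianPDFReal (m : ℝ) {v : ℝ≥0} (hv : v ≠ 0) (x : ℝ) :
    HasDerivAt (gaussianPDFReal m v) (-((x - m) / v) * gaussianPDFReal m v x) x := by
  have hexponent : HasDerivAt (fun x : ℝ ↦ -(x - m) ^ 2 / (2 * v)) (-((x - m) / v)) x := by
    refine ((((hasDerivAt_id x).sub_const m).pow 2).neg.div_const (2 * (v : ℝ))).congr_deriv ?_
    simp only [id_eq]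
    field
  rw [gaussianPDFReal_def]
  exact (hexponent.exp.const_mul _).congr_deriv (by ring)

lemma integrable_gaussianReal_iff {m : ℝ} {v : ℝ≥0} (hv : v ≠ 0) {f : ℝ → ℝ} :
    Integrable f (gaussianReal m v) ↔ Integrable fun x ↦ gaussianPDFReal m v x * f x := by
  rw [gaussianReal_of_var_ne_zero _ hv, integrable_withDensity_iff_integrable_smul'
    (measurable_gaussianPDF m v) (ae_of_all _ fun _ ↦ gaussianPDF_lt_top)]
  simp only [toReal_gaussianPDF, smul_eq_mul]

theorem integral_sub_mul_gaussianReal {m : ℝ} {v : ℝ≥0} {f f' : ℝ → ℝ}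
    (hderiv : ∀ x, HasDerivAt f (f' x) x) (hf : Integrable f (gaussianReal m v))
    (hxf : Integrable (fun x ↦ (x - m) * f x) (gaussianReal m v))
    (hf' : Integrable f' (gaussianReal m v)) :
    ∫ x, (x - m) * f x ∂(gaussianReal m v) = v * ∫ x, f' x ∂(gaussianReal m v) := by
  obtain rfl | hv := eq_or_ne v 0
  · simp
  rw [integrable_gaussianReal_iff hv] at hf hxf hf'
  have hparts := integral_mul_deriv_eq_deriv_mul_of_integrable
    (fun x _ ↦ hderiv x) (fun x _ ↦ hasDerivAt_gaussianPDFReal m hv x)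
    ((hxf.const_mul (-(v : ℝ)⁻¹)).congr (ae_of_all _ fun x ↦ by simp only [Pi.mul_apply]; ring))
    (hf'.congr (ae_of_all _ fun x ↦ mul_comm _ _)) (hf.congr (ae_of_all _ fun x ↦ mul_comm _ _))
  simp only [integral_gaussianReal_eq_integral_smul hv, smul_eq_mul]
  calc ∫ x, gaussianPDFReal m v x * ((x - m) * f x)
      = -v * ∫ x, f x * (-((x - m) / v) * gaussianPDFReal m v x) := by
        rw [← integral_const_mul]
        congr with x
        field
    _ = v * ∫ x, gaussianPDFReal m v x * f' x := by
        rw [hparts, neg_mul_neg]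
        simp only [mul_comm]

variable {Ω E : Type*} {mΩ : MeasurableSpace Ω} {P : Measure Ω} [NormedAddCommGroup E]
  [NormedSpace ℝ E] {V : Ω → ℝ} {W : Ω → E}

lemma variance_smul_inv_smul [IsProbabilityMeasure P] (hV : MemLp V 2 P) {c : E}
    (hc : ∀ L : StrongDual ℝ E, cov[V, fun ω ↦ L (W ω); P] = L c) :
    Var[V; P] • Var[V; P]⁻¹ • c = c := by
  -- If `V` is degenerate then `c = 0`, so the junk value `0⁻¹ = 0` does no harm.
  obtain hvar | hvar := eq_or_ne Var[V; P] 0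
  · have hconst : V =ᵐ[P] fun _ ↦ P[V] := ae_eq_integral_of_variance_eq_zero hV hvar
    have hc₀ : c = 0 := SeparatingDual.eq_zero_of_forall_dual_eq_zero (R := ℝ) fun L ↦ by
      rw [← hc, covariance, integral_congr_ae (g := 0), Pi.zero_def, integral_zero]
      filter_upwards [hconst] with ω hω
      simp [hω]
    rw [hc₀, smul_zero, smul_zero]
  · exact smul_inv_smul₀ hvar c

variable [MeasurableSpace E] [BorelSpace E]

lemma integral_mul_comp_add_smul_gaussianReal {v : ℝ≥0} {g : E → ℝ} (hg : Differentiable ℝ g)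
    {M : ℝ} (hgM : ∀ x, |g x| ≤ M) {d : E} {N : ℝ} (hgN : ∀ x, |fderiv ℝ g x d| ≤ N) (u : E) :
    ∫ x, x * g (u + x • d) ∂(gaussianReal 0 v) =
      v * ∫ x, fderiv ℝ g (u + x • d) d ∂(gaussianReal 0 v) := by
  have hderiv (x : ℝ) : HasDerivAt (fun x : ℝ ↦ g (u + x • d)) (fderiv ℝ g (u + x • d) d) x := by
    have hline : HasDerivAt (fun x : ℝ ↦ u + x • d) d x := by
      simpa using ((hasDerivAt_id x).smul_const d).const_add u
    exact (hg _).hasFDerivAt.comp_hasDerivAt x hline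
  have hline : Measurable fun x : ℝ ↦ u + x • d := by fun_prop
  have hgline : AEStronglyMeasurable (fun x : ℝ ↦ g (u + x • d)) (gaussianReal 0 v) :=
    (hg.continuous.measurable.comp hline).aestronglyMeasurable
  have hid : Integrable (fun x : ℝ ↦ x) (gaussianReal 0 v) :=
    (memLp_id_gaussianReal 1).integrable le_rfl
  simpa only [sub_zero] using integral_sub_mul_gaussianReal (m := 0) hderiv
    (.of_bound hgline M (ae_of_all _ fun x ↦ hgM _))
    (by simpa only [sub_zero] using hid.mul_bdd hgline (ae_of_all _ fun x ↦ hgM _))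
    (.of_bound ((measurable_fderiv_apply_const ℝ g d).comp hline).aestronglyMeasurable N
      (ae_of_all _ fun x ↦ hgN _))

variable [SecondCountableTopology E]

lemma integral_fst_mul_comp_add_smul_gaussianReal_prod {v : ℝ≥0} (ν : Measure E)
    [IsFiniteMeasure ν] {g : E → ℝ} (hg : Differentiable ℝ g) {M : ℝ} (hgM : ∀ x, |g x| ≤ M)
    {d : E} {N : ℝ} (hgN : ∀ x, |fderiv ℝ g x d| ≤ N) :
    ∫ p, p.1 * g (p.2 + p.1 • d) ∂((gaussianReal 0 v).prod ν) =
      v * ∫ p, fderiv ℝ g (p.2 + p.1 • d) d ∂((gaussianReal 0 v).prod ν) := by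
  have hline : Measurable fun p : ℝ × E ↦ p.2 + p.1 • d := by fun_prop
  have hid : Integrable (fun x : ℝ ↦ x) (gaussianReal 0 v) :=
    (memLp_id_gaussianReal 1).integrable le_rfl
  rw [integral_prod_symm, integral_prod_symm, ← integral_const_mul]
  · simp only [integral_mul_comp_add_smul_gaussianReal hg hgM hgN]
  · exact .of_bound ((measurable_fderiv_apply_const ℝ g d).comp hline).aestronglyMeasurable N
      (ae_of_all _ fun _ ↦ hgN _)
  · exact (hid.comp_fst ν).mul_bdd (hg.continuous.measurable.comp hline).aestronglyMeasurable
      (ae_of_all _ fun _ ↦ hgM _)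

variable [CompleteSpace E]

lemma indepFun_sub_smul_of_hasGaussianLaw (hVW : HasGaussianLaw (fun ω ↦ (V ω, W ω)) P) {d : E}
    (hd : ∀ L : StrongDual ℝ E, cov[V, fun ω ↦ L (W ω); P] = Var[V; P] * L d) :
    IndepFun V (fun ω ↦ W ω - V ω • d) P := by
  have := hVW.isProbabilityMeasure
  have hjoint : HasGaussianLaw (fun ω ↦ (V ω, W ω - V ω • d)) P :=
    hVW.map_fun ((ContinuousLinearMap.fst ℝ ℝ E).prod
      (.snd ℝ ℝ E - (ContinuousLinearMap.fst ℝ ℝ E).smulRight d))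
  refine hjoint.indepFun_of_covariance_strongDual fun L₁ L₂ ↦ ?_
  have hL₁ : L₁ ∘ V = fun ω ↦ L₁ 1 * V ω := by
    ext ω
    simpa [mul_comm] using L₁.map_smul (V ω) 1
  have hL₂ : L₂ ∘ (fun ω ↦ W ω - V ω • d) = fun ω ↦ L₂ (W ω) - V ω * L₂ d := by
    ext ω
    simp
  have hV : MemLp V 2 P := hVW.fst.memLp_two
  rw [hL₁, hL₂, covariance_const_mul_left, covariance_fun_sub_right hV
    (hVW.snd.map_fun L₂).memLp_two (hV.mul_const _), covariance_mul_const_right,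
    covariance_self hV.aemeasurable, hd, sub_self, mul_zero]

theorem integral_mul_comp_eq_integral_fderiv (hVW : HasGaussianLaw (fun ω ↦ (V ω, W ω)) P)
    (hV : P[V] = 0) {c : E} (hc : ∀ L : StrongDual ℝ E, cov[V, fun ω ↦ L (W ω); P] = L c)
    {g : E → ℝ} (hg : Differentiable ℝ g) {M N : ℝ} (hgM : ∀ x, |g x| ≤ M)
    (hgN : ∀ x, |fderiv ℝ g x c| ≤ N) :
    ∫ ω, V ω * g (W ω) ∂P = ∫ ω, fderiv ℝ g (W ω) c ∂P := by
  have := hVW.isProbabilityMeasure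
  set d := Var[V; P]⁻¹ • c
  have hd : Var[V; P] • d = c := variance_smul_inv_smul hVW.fst.memLp_two hc
  set U : Ω → E := fun ω ↦ W ω - V ω • d
  set γ := gaussianReal 0 Var[V; P].toNNReal
  have hU : AEMeasurable U P := hVW.snd.aemeasurable.sub (hVW.fst.aemeasurable.smul_const d)
  have hW (ω : Ω) : W ω = U ω + V ω • d := (sub_add_cancel _ _).symm
  have hVlaw : HasLaw V γ P := ⟨hVW.fst.aemeasurable, by rw [hVW.fst.map_eq_gaussianReal, hV]⟩
  have hUlaw : HasLaw U (P.map U) P := ⟨hU, rfl⟩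
  have hindep : IndepFun V U P := indepFun_sub_smul_of_hasGaussianLaw hVW fun L ↦ by
    rw [hc, ← smul_eq_mul, ← map_smul, hd]
  have := Measure.isProbabilityMeasure_map hU
  have hlaw : HasLaw (fun ω ↦ (V ω, U ω)) (γ.prod (P.map U)) P :=
    (indepFun_iff_hasLaw_prodMk_prod hVlaw hUlaw).1 hindep
  have hline : Measurable fun p : ℝ × E ↦ p.2 + p.1 • d := by fun_prop
  have hgd (x : E) : |fderiv ℝ g x d| ≤ |Var[V; P]⁻¹| * N := by
    rw [map_smul, smul_eq_mul, abs_mul]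
    gcongr
    exact hgN x
  simp only [hW]
  calc ∫ ω, V ω * g (U ω + V ω • d) ∂P
      = ∫ p, p.1 * g (p.2 + p.1 • d) ∂(γ.prod (P.map U)) :=
        hlaw.integral_comp
          (measurable_fst.mul (hg.continuous.measurable.comp hline)).aestronglyMeasurable
    _ = Var[V; P] * ∫ p, fderiv ℝ g (p.2 + p.1 • d) d ∂(γ.prod (P.map U)) := by
        rw [integral_fst_mul_comp_add_smul_gaussianReal_prod _ hg hgM hgd,
          coe_toNNReal _ (variance_nonneg V P)]
    _ = Var[V; P] * ∫ ω, fderiv ℝ g (U ω + V ω • d) d ∂P := by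
        congr 1
        exact (hlaw.integral_comp
          ((measurable_fderiv_apply_const ℝ g d).comp hline).aestronglyMeasurable).symm
    _ = ∫ ω, fderiv ℝ g (U ω + V ω • d) c ∂P := by
        simp only [← hd, map_smul, smul_eq_mul, integral_const_mul]

section Pi

variable {ι : Type*} [Finite ι] {W : Ω → ι → ℝ}

lemma covariance_strongDual_pi [IsFiniteMeasure P]
    (hV : MemLp V 2 P) (hW : ∀ j, MemLp (fun ω ↦ W ω j) 2 P) (L : StrongDual ℝ (ι → ℝ)) :
    cov[V, fun ω ↦ L (W ω); P] = L fun j ↦ cov[V, fun ω ↦ W ω j; P] := by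
  classical
  have := Fintype.ofFinite ι
  obtain ⟨a, ha⟩ : ∃ a : ι → ℝ, ∀ x, L x = ∑ j, x j * a j :=
    ⟨_, LinearMap.pi_apply_eq_sum_univ (L : (ι → ℝ) →ₗ[ℝ] ℝ)⟩
  simp only [ha]
  rw [covariance_fun_sum_right (fun j ↦ (hW j).mul_const _) hV]
  simp only [covariance_mul_const_right]

theorem integral_mul_comp_pi_eq_integral_fderiv
    (hVW : HasGaussianLaw (fun ω ↦ (V ω, W ω)) P) (hV : P[V] = 0) {g : (ι → ℝ) → ℝ}
    (hg : Differentiable ℝ g) {M N : ℝ} (hgM : ∀ x, |g x| ≤ M)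
    (hgN : ∀ x, |fderiv ℝ g x fun j ↦ cov[V, fun ω ↦ W ω j; P]| ≤ N) :
    ∫ ω, V ω * g (W ω) ∂P = ∫ ω, fderiv ℝ g (W ω) (fun j ↦ cov[V, fun ω ↦ W ω j; P]) ∂P :=
  have := hVW.isProbabilityMeasure
  have := Fintype.ofFinite ι
  integral_mul_comp_eq_integral_fderiv hVW hV
    (covariance_strongDual_pi hVW.fst.memLp_two fun j ↦ (hVW.snd.eval j).memLp_two) hg hgM hgN

end Pi

end GaussianIntegrationByParts

section CircularInterpolation

/-- The path `θ ↦ cos θ • X + sin θ • Y` from `X` to `Y` as `θ` runs through `[0, π / 2]`.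
Its velocity is again a point of the same curve, with parameter `θ + π / 2`. -/
noncomputable def circularInterp {Ω E : Type*} [AddCommGroup E] [Module ℝ E] (X Y : Ω → E) (θ : ℝ)
    (ω : Ω) : E :=
  cos θ • X ω + sin θ • Y ω

variable {Ω E : Type*} {mΩ : MeasurableSpace Ω} {P : Measure Ω} [NormedAddCommGroup E]
  [NormedSpace ℝ E] {X Y : Ω → E}

lemma hasDerivAt_circularInterp (θ : ℝ) (ω : Ω) :
    HasDerivAt (fun θ ↦ circularInterp X Y θ ω) (circularInterp X Y (θ + π / 2) ω) θ := by
  rw [circularInterp, cos_add_pi_div_two, sin_add_pi_div_two]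
  exact ((hasDerivAt_cos θ).smul_const _).add ((hasDerivAt_sin θ).smul_const _)

lemma norm_circularInterp_le (θ : ℝ) (ω : Ω) :
    ‖circularInterp X Y θ ω‖ ≤ ‖X ω‖ + ‖Y ω‖ := by
  refine (norm_add_le _ _).trans ?_
  rw [norm_smul, norm_smul]
  exact add_le_add (mul_le_of_le_one_left (norm_nonneg _) (abs_cos_le_one θ))
    (mul_le_of_le_one_left (norm_nonneg _) (abs_sin_le_one θ))

lemma integrable_circularInterp (hX : Integrable X P) (hY : Integrable Y P) (θ : ℝ) :
    Integrable (circularInterp X Y θ) P :=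
  (hX.smul _).add (hY.smul _)

lemma integrable_comp_of_norm_fderiv_le [IsFiniteMeasure P] (hX : Integrable X P) {f : E → ℝ}
    (hf : Differentiable ℝ f) {M : ℝ} (hfM : ∀ x, ‖fderiv ℝ f x‖ ≤ M) :
    Integrable (fun ω ↦ f (X ω)) P := by
  refine ((hX.norm.const_mul M).add (integrable_const ‖f 0‖)).mono'
    (hf.continuous.comp_aestronglyMeasurable hX.aestronglyMeasurable) (ae_of_all _ fun ω ↦ ?_)
  have hmvt : ‖f (X ω) - f 0‖ ≤ M * ‖X ω - 0‖ := convex_univ.norm_image_sub_le_of_norm_fderiv_le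
    (fun x _ ↦ hf x) (fun x _ ↦ hfM x) (Set.mem_univ _) (Set.mem_univ _)
  rw [sub_zero] at hmvt
  exact (norm_le_norm_sub_add _ _).trans (add_le_add_left hmvt _)

theorem hasDerivAt_integral_circularInterp [IsFiniteMeasure P] (hX : Integrable X P)
    (hY : Integrable Y P) {f : E → ℝ} (hf : ContDiff ℝ 1 f) {M : ℝ}
    (hfM : ∀ x, ‖fderiv ℝ f x‖ ≤ M) (θ : ℝ) :
    HasDerivAt (fun θ ↦ ∫ ω, f (circularInterp X Y θ ω) ∂P)
      (∫ ω, fderiv ℝ f (circularInterp X Y θ ω) (circularInterp X Y (θ + π / 2) ω) ∂P) θ := by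
  have hf₁ : Differentiable ℝ f := hf.differentiable one_ne_zero
  have hint (φ : ℝ) := integrable_circularInterp (P := P) hX hY φ
  refine (hasDerivAt_integral_of_dominated_loc_of_deriv_le Filter.univ_mem
    (bound := fun ω ↦ M * (‖X ω‖ + ‖Y ω‖))
    (F' := fun φ ω ↦ fderiv ℝ f (circularInterp X Y φ ω) (circularInterp X Y (φ + π / 2) ω))
    (.of_forall fun φ ↦ hf.continuous.comp_aestronglyMeasurable (hint φ).aestronglyMeasurable)
    (integrable_comp_of_norm_fderiv_le (hint θ) hf₁ hfM) ?_ (ae_of_all _ fun ω φ _ ↦ ?_)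
    ((hX.norm.add hY.norm).const_mul M) (ae_of_all _ fun ω φ _ ↦ ?_)).2
  · exact isBoundedBilinearMap_apply.continuous.comp_aestronglyMeasurable₂
      ((hf.continuous_fderiv one_ne_zero).comp_aestronglyMeasurable (hint θ).aestronglyMeasurable)
      (hint _).aestronglyMeasurable
  · have hM : 0 ≤ M := (norm_nonneg _).trans (hfM 0)
    exact (ContinuousLinearMap.le_of_opNorm_le _ (hfM _) _).trans
      (mul_le_mul_of_nonneg_left (norm_circularInterp_le _ ω) hM)
  · exact (hf₁ _).hasFDerivAt.comp_hasDerivAt φ (hasDerivAt_circularInterp φ ω)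

lemma hasGaussianLaw_prodMk_circularInterp [CompleteSpace E] [SecondCountableTopology E]
    [MeasurableSpace E] [BorelSpace E] (hX : HasGaussianLaw X P) (hY : HasGaussianLaw Y P)
    (hXY : IndepFun X Y P) (φ θ : ℝ) :
    HasGaussianLaw (fun ω ↦ (circularInterp X Y φ ω, circularInterp X Y θ ω)) P := by
  let interp (θ : ℝ) : E × E →L[ℝ] E := cos θ • .fst ℝ E E + sin θ • .snd ℝ E E
  exact (hXY.hasGaussianLaw hX hY).map_fun ((interp φ).prod (interp θ))

end CircularInterpolation

section Softmax

variable {ι : Type*} [Fintype ι]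

/-- The log-sum-exp function `log (∑ i, exp (x i))`, a smooth approximation of the maximum of the
coordinates up to an error `log (card ι)`. -/
noncomputable def logSumExp (x : ι → ℝ) : ℝ := log (∑ i, exp (x i))

/-- The softmax weights `exp (x i) / ∑ j, exp (x j)`, i.e. the gradient of `logSumExp`. -/
noncomputable def softmax (x : ι → ℝ) (i : ι) : ℝ := exp (x i) / ∑ j, exp (x j)

lemma softmax_nonneg (x : ι → ℝ) (i : ι) : 0 ≤ softmax x i := by
  rw [softmax]
  positivity

lemma abs_sum_mul_le_of_sum_eq_one {p : ι → ℝ} (hp : ∀ i, 0 ≤ p i) (hp_sum : ∑ i, p i = 1)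
    (w : ι → ℝ) : |∑ i, p i * w i| ≤ ‖w‖ :=
  calc |∑ i, p i * w i| ≤ ∑ i, |p i * w i| := Finset.abs_sum_le_sum_abs _ _
    _ ≤ ∑ i, p i * ‖w‖ := Finset.sum_le_sum fun i _ ↦ by
        rw [abs_mul, abs_of_nonneg (hp i)]
        exact mul_le_mul_of_nonneg_left (norm_le_pi_norm w i) (hp i)
    _ = ‖w‖ := by rw [← Finset.sum_mul, hp_sum, one_mul]

lemma sum_mul_diag_sub_sum_eq {p : ι → ℝ} (hp_sum : ∑ i, p i = 1) (D : ι → ι → ℝ) :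
    ∑ i, p i * (D i i - ∑ j, p j * D i j) =
      (∑ i, ∑ j, p i * p j * (D i i + D j j - 2 * D i j)) / 2 := by
  have hdiag : ∑ i, ∑ j, p i * p j * D i i = ∑ i, p i * D i i := by
    refine Finset.sum_congr rfl fun i _ ↦ ?_
    rw [← Finset.sum_mul, ← Finset.mul_sum, hp_sum, mul_one]
  have hdiag' : ∑ i, ∑ j, p i * p j * D j j = ∑ i, p i * D i i := by
    rw [Finset.sum_comm, ← hdiag]
    simp only [mul_comm]
  have hoff : ∑ i, ∑ j, p i * p j * (2 * D i j) = 2 * ∑ i, p i * ∑ j, p j * D i j := by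
    simp only [Finset.mul_sum]
    exact Finset.sum_congr rfl fun i _ ↦ Finset.sum_congr rfl fun j _ ↦ by ring
  simp only [mul_sub, mul_add, Finset.sum_sub_distrib, Finset.sum_add_distrib, hdiag, hdiag', hoff]
  ring

variable [Nonempty ι]

lemma sum_exp_pos (x : ι → ℝ) : 0 < ∑ i, exp (x i) :=
  Finset.sum_pos (fun i _ ↦ exp_pos (x i)) Finset.univ_nonempty

lemma exp_logSumExp (x : ι → ℝ) : exp (logSumExp x) = ∑ i, exp (x i) := exp_log (sum_exp_pos x)

lemma iSup_le_logSumExp (x : ι → ℝ) : ⨆ i, x i ≤ logSumExp x :=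
  ciSup_le fun i ↦ by
    rw [← exp_le_exp, exp_logSumExp]
    exact Finset.single_le_sum (fun j _ ↦ (exp_pos (x j)).le) (Finset.mem_univ i)

lemma logSumExp_le_iSup_add_log_card (x : ι → ℝ) :
    logSumExp x ≤ (⨆ i, x i) + log (Fintype.card ι) := by
  rw [← exp_le_exp, exp_logSumExp, exp_add, exp_log (by exact_mod_cast Fintype.card_pos), mul_comm,
    ← nsmul_eq_mul]
  exact Finset.sum_le_card_nsmul _ _ _ fun i _ ↦
    exp_le_exp.2 (le_ciSup (Set.finite_range x).bddAbove i)

lemma softmax_eq_exp_sub (x : ι → ℝ) (i : ι) : softmax x i = exp (x i - logSumExp x) := by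
  rw [exp_sub, exp_logSumExp, softmax]

lemma sum_softmax (x : ι → ℝ) : ∑ i, softmax x i = 1 := by
  simp only [softmax]
  rw [← Finset.sum_div, div_self (sum_exp_pos x).ne']

lemma abs_softmax_le_one (x : ι → ℝ) (i : ι) : |softmax x i| ≤ 1 := by
  rw [abs_of_nonneg (softmax_nonneg x i), ← sum_softmax x]
  exact Finset.single_le_sum (fun j _ ↦ softmax_nonneg x j) (Finset.mem_univ i)

lemma contDiff_logSumExp : ContDiff ℝ 1 (logSumExp : (ι → ℝ) → ℝ) := by
  unfold logSumExp
  exact ContDiff.log (by fun_prop) fun x ↦ (sum_exp_pos x).ne'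

lemma differentiable_logSumExp : Differentiable ℝ (logSumExp : (ι → ℝ) → ℝ) :=
  contDiff_logSumExp.differentiable one_ne_zero

lemma fderiv_logSumExp_apply (x w : ι → ℝ) :
    fderiv ℝ logSumExp x w = ∑ i, softmax x i * w i := by
  have hsum : HasFDerivAt (fun x : ι → ℝ ↦ ∑ i, exp (x i))
      (∑ i, exp (x i) • ContinuousLinearMap.proj (R := ℝ) (φ := fun _ : ι ↦ ℝ) i) x :=
    .fun_sum fun i _ ↦ (hasFDerivAt_apply i x).exp
  have hlog : HasFDerivAt logSumExp _ x := hsum.log (sum_exp_pos x).ne'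
  rw [hlog.fderiv]
  simp only [softmax, smul_apply, FunLike.coe_sum]
  simp [Finset.mul_sum, div_eq_inv_mul, mul_assoc]

lemma norm_fderiv_logSumExp_le_one (x : ι → ℝ) : ‖fderiv ℝ logSumExp x‖ ≤ 1 :=
  ContinuousLinearMap.opNorm_le_bound _ zero_le_one fun w ↦ by
    rw [fderiv_logSumExp_apply, one_mul]
    exact abs_sum_mul_le_of_sum_eq_one (softmax_nonneg x) (sum_softmax x) w

lemma hasFDerivAt_softmax (x : ι → ℝ) (i : ι) :
    HasFDerivAt (fun x ↦ softmax x i)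
      (softmax x i • (ContinuousLinearMap.proj i - fderiv ℝ logSumExp x)) x := by
  simp only [softmax_eq_exp_sub]
  exact ((hasFDerivAt_apply i x).sub (differentiable_logSumExp x).hasFDerivAt).exp

lemma fderiv_softmax_apply (x w : ι → ℝ) (i : ι) :
    fderiv ℝ (fun x ↦ softmax x i) x w = softmax x i * (w i - ∑ j, softmax x j * w j) := by
  rw [(hasFDerivAt_softmax x i).fderiv, ← fderiv_logSumExp_apply]
  rfl

lemma abs_fderiv_softmax_apply_le (x w : ι → ℝ) (i : ι) :
    |fderiv ℝ (fun x ↦ softmax x i) x w| ≤ 2 * ‖w‖ := by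
  rw [fderiv_softmax_apply, abs_mul]
  calc |softmax x i| * |w i - ∑ j, softmax x j * w j|
      ≤ 1 * (‖w‖ + ‖w‖) := by
        gcongr
        · exact abs_softmax_le_one x i
        · exact (abs_sub _ _).trans (add_le_add (norm_le_pi_norm w i)
            (abs_sum_mul_le_of_sum_eq_one (softmax_nonneg x) (sum_softmax x) w))
    _ = 2 * ‖w‖ := by ring

end Softmax

section SudakovFernique

variable {Ω Ω' ι : Type*} {mΩ : MeasurableSpace Ω} {mΩ' : MeasurableSpace Ω'} {P : Measure Ω}
  {P' : Measure Ω'} {X Y : Ω → ι → ℝ}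

lemma covariance_circularInterp_add_pi_div_two [IsFiniteMeasure P]
    (hX : ∀ i, MemLp (fun ω ↦ X ω i) 2 P) (hY : ∀ i, MemLp (fun ω ↦ Y ω i) 2 P)
    (hXY : ∀ i j, cov[fun ω ↦ X ω i, fun ω ↦ Y ω j; P] = 0) (θ : ℝ) (i j : ι) :
    cov[fun ω ↦ circularInterp X Y (θ + π / 2) ω i, fun ω ↦ circularInterp X Y θ ω j; P] =
      sin θ * cos θ *
        (cov[fun ω ↦ Y ω i, fun ω ↦ Y ω j; P] - cov[fun ω ↦ X ω i, fun ω ↦ X ω j; P]) := by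
  have hYX : cov[fun ω ↦ Y ω i, fun ω ↦ X ω j; P] = 0 := by rw [covariance_comm, hXY]
  have hcos (i : ι) (φ : ℝ) : MemLp (fun ω ↦ cos φ * X ω i) 2 P := (hX i).const_mul _
  have hsin (i : ι) (φ : ℝ) : MemLp (fun ω ↦ sin φ * Y ω i) 2 P := (hY i).const_mul _
  have hadd (i : ι) (φ : ℝ) : (fun ω ↦ circularInterp X Y φ ω i) =
      (fun ω ↦ cos φ * X ω i) + fun ω ↦ sin φ * Y ω i := rfl
  rw [hadd, hadd, covariance_add_left (hcos i _) (hsin i _) ((hcos j θ).add (hsin j θ)),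
    covariance_add_right (hcos i _) (hcos j θ) (hsin j θ),
    covariance_add_right (hsin i _) (hcos j θ) (hsin j θ)]
  simp only [covariance_const_mul_left, covariance_const_mul_right, hXY, hYX, cos_add_pi_div_two,
    sin_add_pi_div_two]
  ring

lemma integral_circularInterp_apply (hX : ∀ i, Integrable (fun ω ↦ X ω i) P)
    (hY : ∀ i, Integrable (fun ω ↦ Y ω i) P) (hX₀ : ∀ i, ∫ ω, X ω i ∂P = 0)
    (hY₀ : ∀ i, ∫ ω, Y ω i ∂P = 0) (θ : ℝ) (i : ι) :
    ∫ ω, circularInterp X Y θ ω i ∂P = 0 := by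
  simp only [circularInterp, Pi.add_apply, Pi.smul_apply, smul_eq_mul]
  rw [integral_add ((hX i).const_mul _) ((hY i).const_mul _), integral_const_mul,
    integral_const_mul, hX₀, hY₀, mul_zero, mul_zero, add_zero]

variable [Nonempty ι]

section Fintype

variable [Fintype ι]

lemma integral_fderiv_logSumExp_eq_sum_covariance {V W : Ω → ι → ℝ}
    (hVW : HasGaussianLaw (fun ω ↦ (V ω, W ω)) P) (hV : ∀ i, ∫ ω, V ω i ∂P = 0)
    {C : ι → ι → ℝ} (hC : ∀ i j, cov[fun ω ↦ V ω i, fun ω ↦ W ω j; P] = C i j) :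
    ∫ ω, fderiv ℝ logSumExp (W ω) (V ω) ∂P =
      ∫ ω, (∑ i, ∑ j, softmax (W ω) i * softmax (W ω) j * (C i i + C j j - 2 * C i j)) / 2 ∂P := by
  have := hVW.isProbabilityMeasure
  have hW : AEStronglyMeasurable W P := hVW.snd.integrable.aestronglyMeasurable
  have hdiff (i : ι) : Differentiable ℝ fun x : ι → ℝ ↦ softmax x i :=
    fun x ↦ (hasFDerivAt_softmax x i).differentiableAt
  have hmeas (i : ι) : AEStronglyMeasurable (fun ω ↦ softmax (W ω) i) P :=
    (hdiff i).continuous.comp_aestronglyMeasurable hW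
  have hVp (i : ι) : Integrable (fun ω ↦ V ω i * softmax (W ω) i) P :=
    (hVW.fst.eval i).integrable.mul_bdd (hmeas i) (ae_of_all _ fun ω ↦ abs_softmax_le_one _ i)
  have hfderiv (i : ι) : Integrable (fun ω ↦ fderiv ℝ (fun x ↦ softmax x i) (W ω) (C i)) P :=
    .of_bound ((measurable_fderiv_apply_const ℝ _ (C i)).comp_aemeasurable
      hW.aemeasurable).aestronglyMeasurable (2 * ‖C i‖)
      (ae_of_all _ fun ω ↦ abs_fderiv_softmax_apply_le _ _ i)
  have hstein (i : ι) : ∫ ω, V ω i * softmax (W ω) i ∂P =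
      ∫ ω, fderiv ℝ (fun x ↦ softmax x i) (W ω) (C i) ∂P := by
    have hVW_i : HasGaussianLaw (fun ω ↦ (V ω i, W ω)) P :=
      hVW.map_fun ((ContinuousLinearMap.proj (R := ℝ) i).prodMap (.id ℝ (ι → ℝ)))
    have := integral_mul_comp_pi_eq_integral_fderiv hVW_i (hV i) (hdiff i)
      (abs_softmax_le_one · i) (abs_fderiv_softmax_apply_le · _ i)
    simpa only [hC] using this
  calc ∫ ω, fderiv ℝ logSumExp (W ω) (V ω) ∂P
      = ∑ i, ∫ ω, V ω i * softmax (W ω) i ∂P := by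
        simp only [fderiv_logSumExp_apply, mul_comm (softmax _ _)]
        exact integral_finsetSum _ fun i _ ↦ hVp i
    _ = ∫ ω, ∑ i, fderiv ℝ (fun x ↦ softmax x i) (W ω) (C i) ∂P := by
        simp only [hstein]
        exact (integral_finsetSum _ fun i _ ↦ hfderiv i).symm
    _ = _ := by
        simp only [fderiv_softmax_apply, sum_mul_diag_sub_sum_eq (sum_softmax _) C]

lemma integral_fderiv_logSumExp_circularInterp (hX : HasGaussianLaw X P)
    (hY : HasGaussianLaw Y P) (hXY : IndepFun X Y P) (hX₀ : ∀ i, ∫ ω, X ω i ∂P = 0)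
    (hY₀ : ∀ i, ∫ ω, Y ω i ∂P = 0) (θ : ℝ) :
    ∫ ω, fderiv ℝ logSumExp (circularInterp X Y θ ω) (circularInterp X Y (θ + π / 2) ω) ∂P =
      sin θ * cos θ / 2 * ∫ ω, ∑ i, ∑ j,
        softmax (circularInterp X Y θ ω) i * softmax (circularInterp X Y θ ω) j *
          (Var[fun ω ↦ Y ω i - Y ω j; P] - Var[fun ω ↦ X ω i - X ω j; P]) ∂P := by
  have := hX.isProbabilityMeasure
  have hX₂ (i : ι) := (hX.eval i).memLp_two
  have hY₂ (i : ι) := (hY.eval i).memLp_two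
  have hcov := covariance_circularInterp_add_pi_div_two hX₂ hY₂ (fun i j ↦ (hXY.comp
    (measurable_pi_apply i) (measurable_pi_apply j)).covariance_eq_zero (hX₂ i) (hY₂ j)) θ
  rw [integral_fderiv_logSumExp_eq_sum_covariance
    (hasGaussianLaw_prodMk_circularInterp hX hY hXY _ θ) (integral_circularInterp_apply
      (fun i ↦ (hX.eval i).integrable) (fun i ↦ (hY.eval i).integrable) hX₀ hY₀ _) hcov,
    ← integral_const_mul]
  congr with ω
  rw [Finset.sum_div, Finset.mul_sum]
  refine Finset.sum_congr rfl fun i _ ↦ ?_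
  rw [Finset.sum_div, Finset.mul_sum]
  refine Finset.sum_congr rfl fun j _ ↦ ?_
  rw [variance_fun_sub (hX₂ i) (hX₂ j), variance_fun_sub (hY₂ i) (hY₂ j)]
  simp only [covariance_self (hX₂ _).aemeasurable, covariance_self (hY₂ _).aemeasurable]
  ring

lemma integral_logSumExp_le_of_indepFun (hX : HasGaussianLaw X P)
    (hY : HasGaussianLaw Y P) (hXY : IndepFun X Y P) (hX₀ : ∀ i, ∫ ω, X ω i ∂P = 0)
    (hY₀ : ∀ i, ∫ ω, Y ω i ∂P = 0)
    (hvar : ∀ i j, Var[fun ω ↦ Y ω i - Y ω j; P] ≤ Var[fun ω ↦ X ω i - X ω j; P]) :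
    ∫ ω, logSumExp (Y ω) ∂P ≤ ∫ ω, logSumExp (X ω) ∂P := by
  have := hX.isProbabilityMeasure
  set F : ℝ → ℝ := fun θ ↦ ∫ ω, logSumExp (circularInterp X Y θ ω) ∂P with hF
  have hderiv (θ : ℝ) : HasDerivAt F _ θ := hasDerivAt_integral_circularInterp hX.integrable
    hY.integrable contDiff_logSumExp norm_fderiv_logSumExp_le_one θ
  have hanti : AntitoneOn F (Set.Icc 0 (π / 2)) := by
    refine antitoneOn_of_deriv_nonpos (convex_Icc _ _)
      (fun θ _ ↦ (hderiv θ).continuousAt.continuousWithinAt)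
      (fun θ _ ↦ (hderiv θ).differentiableAt.differentiableWithinAt) fun θ hθ ↦ ?_
    rw [interior_Icc] at hθ
    have hsin : 0 ≤ sin θ := sin_nonneg_of_nonneg_of_le_pi hθ.1.le (by linarith [hθ.2, pi_pos])
    have hcos : 0 ≤ cos θ := cos_nonneg_of_mem_Icc ⟨by linarith [hθ.1, pi_pos], hθ.2.le⟩
    rw [(hderiv θ).deriv, integral_fderiv_logSumExp_circularInterp hX hY hXY hX₀ hY₀]
    refine mul_nonpos_of_nonneg_of_nonpos (by positivity) (integral_nonpos fun ω ↦ ?_)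
    exact Finset.sum_nonpos fun i _ ↦ Finset.sum_nonpos fun j _ ↦
      mul_nonpos_of_nonneg_of_nonpos (mul_nonneg (softmax_nonneg _ i) (softmax_nonneg _ j))
        (sub_nonpos.2 (hvar i j))
  have hle : F (π / 2) ≤ F 0 := hanti ⟨le_rfl, by positivity⟩ ⟨by positivity, le_rfl⟩
    (by positivity)
  simpa [hF, circularInterp] using hle

theorem integral_logSumExp_le_of_variance_sub_le {X : Ω → ι → ℝ} {Y : Ω' → ι → ℝ}
    (hX : HasGaussianLaw X P) (hY : HasGaussianLaw Y P') (hX₀ : ∀ i, ∫ ω, X ω i ∂P = 0)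
    (hY₀ : ∀ i, ∫ ω, Y ω i ∂P' = 0)
    (hvar : ∀ i j, Var[fun ω ↦ Y ω i - Y ω j; P'] ≤ Var[fun ω ↦ X ω i - X ω j; P]) :
    ∫ ω, logSumExp (Y ω) ∂P' ≤ ∫ ω, logSumExp (X ω) ∂P := by
  have := hX.isProbabilityMeasure
  have := hY.isProbabilityMeasure
  have := hX.isGaussian_map
  have := hY.isGaussian_map
  have hfst : MeasurePreserving Prod.fst (P.prod P') P := measurePreserving_fst
  have hsnd : MeasurePreserving Prod.snd (P.prod P') P' := measurePreserving_snd
  have hXfst : HasGaussianLaw (fun p : Ω × Ω' ↦ X p.1) (P.prod P') :=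
    (HasLaw.comp ⟨hX.aemeasurable, rfl⟩ hfst.hasLaw).hasGaussianLaw
  have hYsnd : HasGaussianLaw (fun p : Ω × Ω' ↦ Y p.2) (P.prod P') :=
    (HasLaw.comp ⟨hY.aemeasurable, rfl⟩ hsnd.hasLaw).hasGaussianLaw
  have hle := integral_logSumExp_le_of_indepFun hXfst hYsnd
    (indepFun_prod₀ hX.aemeasurable hY.aemeasurable)
    (fun i ↦ by rw [integral_fun_fst (fun ω ↦ X ω i), hX₀, smul_zero])
    (fun i ↦ by rw [integral_fun_snd (fun ω ↦ Y ω i), hY₀, smul_zero])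
    (fun i j ↦ by
      rw [hfst.variance_fun_comp (f := fun ω ↦ X ω i - X ω j)
          ((hX.eval i).aemeasurable.sub (hX.eval j).aemeasurable),
        hsnd.variance_fun_comp (f := fun ω ↦ Y ω i - Y ω j)
          ((hY.eval i).aemeasurable.sub (hY.eval j).aemeasurable)]
      exact hvar i j)
  rw [integral_fun_fst (fun ω ↦ logSumExp (X ω)), integral_fun_snd (fun ω ↦ logSumExp (Y ω))] at hle
  simpa only [probReal_univ, one_smul] using hle

lemma abs_iSup_le_norm (x : ι → ℝ) : |⨆ i, x i| ≤ ‖x‖ := by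
  obtain ⟨i, hi⟩ := exists_eq_ciSup_of_finite (f := x)
  rw [← hi]
  exact norm_le_pi_norm x i

lemma integrable_iSup (hX : Integrable X P) : Integrable (fun ω ↦ ⨆ i, X ω i) P :=
  hX.norm.mono' (AEMeasurable.iSup fun i ↦ (hX.eval i).aemeasurable).aestronglyMeasurable
    (ae_of_all _ fun ω ↦ abs_iSup_le_norm (X ω))

lemma integral_iSup_le_add_log_card_of_variance_sub_le {X : Ω → ι → ℝ} {Y : Ω' → ι → ℝ}
    (hX : HasGaussianLaw X P) (hY : HasGaussianLaw Y P') (hX₀ : ∀ i, ∫ ω, X ω i ∂P = 0)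
    (hY₀ : ∀ i, ∫ ω, Y ω i ∂P' = 0)
    (hvar : ∀ i j, Var[fun ω ↦ Y ω i - Y ω j; P'] ≤ Var[fun ω ↦ X ω i - X ω j; P]) :
    ∫ ω, ⨆ i, Y ω i ∂P' ≤ ∫ ω, ⨆ i, X ω i ∂P + log (Fintype.card ι) := by
  have := hX.isProbabilityMeasure
  have := hY.isProbabilityMeasure
  have hXsup := integrable_iSup hX.integrable
  have hXlse := integrable_comp_of_norm_fderiv_le hX.integrable differentiable_logSumExp
    norm_fderiv_logSumExp_le_one
  have hYlse := integrable_comp_of_norm_fderiv_le hY.integrable differentiable_logSumExp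
    norm_fderiv_logSumExp_le_one
  calc ∫ ω, ⨆ i, Y ω i ∂P'
      ≤ ∫ ω, logSumExp (Y ω) ∂P' :=
        integral_mono (integrable_iSup hY.integrable) hYlse fun ω ↦ iSup_le_logSumExp (Y ω)
    _ ≤ ∫ ω, logSumExp (X ω) ∂P := integral_logSumExp_le_of_variance_sub_le hX hY hX₀ hY₀ hvar
    _ ≤ ∫ ω, ((⨆ i, X ω i) + log (Fintype.card ι)) ∂P :=
        integral_mono hXlse (hXsup.add (integrable_const _))
          fun ω ↦ logSumExp_le_iSup_add_log_card (X ω)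
    _ = ∫ ω, ⨆ i, X ω i ∂P + log (Fintype.card ι) := by
        rw [integral_add hXsup (integrable_const _), integral_const, probReal_univ, one_smul]

end Fintype

theorem integral_iSup_le_of_variance_sub_le [Finite ι] {X : Ω → ι → ℝ} {Y : Ω' → ι → ℝ}
    (hX : HasGaussianLaw X P) (hY : HasGaussianLaw Y P') (hX₀ : ∀ i, ∫ ω, X ω i ∂P = 0)
    (hY₀ : ∀ i, ∫ ω, Y ω i ∂P' = 0)
    (hvar : ∀ i j, Var[fun ω ↦ Y ω i - Y ω j; P'] ≤ Var[fun ω ↦ X ω i - X ω j; P]) :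
    ∫ ω, ⨆ i, Y ω i ∂P' ≤ ∫ ω, ⨆ i, X ω i ∂P := by
  have := Fintype.ofFinite ι
  have hscaled (β : ℝ) (hβ : 0 ≤ β) :
      β * ∫ ω, ⨆ i, Y ω i ∂P' ≤ β * ∫ ω, ⨆ i, X ω i ∂P + log (Fintype.card ι) := by
    have hle := integral_iSup_le_add_log_card_of_variance_sub_le (hX.fun_smul β) (hY.fun_smul β)
      (fun i ↦ by simp [integral_const_mul, hX₀]) (fun i ↦ by simp [integral_const_mul, hY₀])
      (fun i j ↦ by
        simp only [Pi.smul_apply, smul_eq_mul, ← mul_sub, variance_const_mul]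
        exact mul_le_mul_of_nonneg_left (hvar i j) (sq_nonneg β))
    simpa only [Pi.smul_apply, smul_eq_mul, ← mul_iSup_of_nonneg hβ, integral_const_mul] using hle
  by_contra! hlt
  have hgap : 0 < ∫ ω, ⨆ i, Y ω i ∂P' - ∫ ω, ⨆ i, X ω i ∂P := sub_pos.2 hlt
  have hcontra := hscaled ((log (Fintype.card ι) + 1) /
    (∫ ω, ⨆ i, Y ω i ∂P' - ∫ ω, ⨆ i, X ω i ∂P)) (by positivity)
  rw [← sub_le_iff_le_add', ← mul_sub, div_mul_cancel₀ _ hgap.ne'] at hcontra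
  linarith

end SudakovFernique

section IndependentStandardGaussians

variable {Ω ι : Type*} {mΩ : MeasurableSpace Ω} {P : Measure Ω}

lemma inv_sqrt_two_pi_mul_exp_le_measureReal_Ici {u : ℝ} (hu : 0 ≤ u) :
    (√(2 * π))⁻¹ * exp (-(u + 1) ^ 2 / 2) ≤ (gaussianReal 0 1).real (Set.Ici u) := by
  have hpdf (x : ℝ) (hx : x ∈ Set.Icc u (u + 1)) :
      (√(2 * π))⁻¹ * exp (-(u + 1) ^ 2 / 2) ≤ gaussianPDFReal 0 1 x := by
    simp only [gaussianPDFReal, NNReal.coe_one, mul_one, sub_zero]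
    gcongr
    · exact hu.trans hx.1
    · exact hx.2
  calc (√(2 * π))⁻¹ * exp (-(u + 1) ^ 2 / 2)
      = ∫ _ in Set.Icc u (u + 1), (√(2 * π))⁻¹ * exp (-(u + 1) ^ 2 / 2) := by simp
    _ ≤ ∫ x in Set.Icc u (u + 1), gaussianPDFReal 0 1 x :=
        setIntegral_mono_on (integrableOn_const (by simp))
          (integrable_gaussianPDFReal 0 1).integrableOn measurableSet_Icc hpdf
    _ = (gaussianReal 0 1).real (Set.Icc u (u + 1)) := by
        rw [measureReal_def, gaussianReal_apply_eq_integral _ one_ne_zero, ENNReal.toReal_ofReal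
          (setIntegral_nonneg measurableSet_Icc fun x _ ↦ gaussianPDFReal_nonneg _ _ _)]
    _ ≤ (gaussianReal 0 1).real (Set.Ici u) := measureReal_mono Set.Icc_subset_Ici_self

lemma one_sub_pow_mul_le_one {q : ℝ} (hq₀ : 0 ≤ q) (hq₁ : q ≤ 1) (n : ℕ) :
    (1 - q) ^ n * (n * q) ≤ 1 :=
  calc (1 - q) ^ n * (n * q) ≤ exp (-q) ^ n * exp (n * q) := by
        gcongr
        · exact one_sub_le_exp_neg q
        · linarith [add_one_le_exp (n * q)]
    _ = 1 := by rw [← exp_nat_mul, ← exp_add, mul_neg, neg_add_cancel, exp_zero]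

lemma integral_abs_le_sqrt_integral_sq [IsProbabilityMeasure P] {Z : Ω → ℝ} (hZ : MemLp Z 2 P) :
    ∫ ω, |Z ω| ∂P ≤ √(∫ ω, Z ω ^ 2 ∂P) := by
  refine le_sqrt_of_sq_le (sub_nonneg.1 ?_)
  have hvar := variance_nonneg |Z| P
  rw [variance_eq_sub hZ.abs] at hvar
  simpa only [Pi.pow_apply, Pi.abs_apply, sq_abs] using hvar

lemma integral_abs_le_one_of_hasLaw_gaussianReal {Z : Ω → ℝ}
    (hZ : HasLaw Z (gaussianReal 0 1) P) : ∫ ω, |Z ω| ∂P ≤ 1 := by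
  have := hZ.isProbabilityMeasure
  have hmean : ∫ ω, Z ω ∂P = 0 := hZ.integral_eq.trans integral_id_gaussianReal
  have hsq : ∫ ω, Z ω ^ 2 ∂P = 1 := by
    rw [← variance_of_integral_eq_zero hZ.aemeasurable hmean, hZ.variance_eq,
      variance_id_gaussianReal, NNReal.coe_one]
  simpa only [hsq, sqrt_one] using integral_abs_le_sqrt_integral_sq hZ.hasGaussianLaw.memLp_two

lemma measureReal_exists_mem_eq_of_iIndepFun [Fintype ι] [IsProbabilityMeasure P] {E : Type*}
    [MeasurableSpace E] {Z : ι → Ω → E} {μ : Measure E} [IsProbabilityMeasure μ]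
    (hlaw : ∀ i, HasLaw (Z i) μ P) (hindep : iIndepFun Z P) {s : Set E} (hs : MeasurableSet s) :
    P.real {ω | ∃ i, Z i ω ∈ s} = 1 - (1 - μ.real s) ^ Fintype.card ι := by
  have hcompl : {ω | ∃ i, Z i ω ∈ s} = (⋂ i ∈ Finset.univ, Z i ⁻¹' sᶜ)ᶜ := by
    ext ω
    simp
  have hnull : NullMeasurableSet (⋂ i ∈ Finset.univ, Z i ⁻¹' sᶜ) P :=
    Finset.nullMeasurableSet_biInter _ fun i _ ↦
      (hlaw i).aemeasurable.nullMeasurableSet_preimage hs.compl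
  have hmem (i : ι) : P.real (Z i ⁻¹' sᶜ) = 1 - μ.real s := by
    rw [← probReal_compl_eq_one_sub hs]
    exact (hlaw i).measureReal_eq hs.compl
  rw [hcompl, probReal_compl_eq_one_sub₀ hnull, measureReal_def,
    hindep.measure_inter_preimage_eq_mul _ fun _ _ ↦ hs.compl, ENNReal.toReal_prod]
  simp only [← measureReal_def, hmem, Finset.prod_const, Finset.card_univ]

variable [Fintype ι]

lemma mul_measureReal_exists_le_le_integral_iSup_add [IsFiniteMeasure P] {X : Ω → ι → ℝ}
    (hX : Integrable X P) {u : ℝ} (hu : 0 ≤ u) (i₀ : ι) :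
    u * P.real {ω | ∃ i, u ≤ X ω i} ≤ ∫ ω, ⨆ i, X ω i ∂P + ∫ ω, |X ω i₀| ∂P := by
  have : Nonempty ι := ⟨i₀⟩
  have hle (ω : Ω) (i : ι) : X ω i ≤ ⨆ i, X ω i := le_ciSup (Set.finite_range (X ω)).bddAbove i
  have hsup := integrable_iSup hX
  have habs := (hX.eval i₀).abs
  calc u * P.real {ω | ∃ i, u ≤ X ω i}
      ≤ u * P.real {ω | u ≤ (⨆ i, X ω i) + |X ω i₀|} :=
        mul_le_mul_of_nonneg_left (measureReal_mono fun ω ⟨i, hi⟩ ↦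
          le_add_of_le_of_nonneg (hi.trans (hle ω i)) (abs_nonneg _)) hu
    _ ≤ ∫ ω, ((⨆ i, X ω i) + |X ω i₀|) ∂P :=
        mul_meas_ge_le_integral_of_nonneg (ae_of_all _ fun ω ↦ neg_le_iff_add_nonneg.1
          ((neg_abs_le (X ω i₀)).trans (hle ω i₀))) (hsup.add habs) u
    _ = ∫ ω, ⨆ i, X ω i ∂P + ∫ ω, |X ω i₀| ∂P := integral_add hsup habs

lemma integral_iSup_nonneg [Nonempty ι] {X : Ω → ι → ℝ} (hX : Integrable X P)
    (hX₀ : ∀ i, ∫ ω, X ω i ∂P = 0) : 0 ≤ ∫ ω, ⨆ i, X ω i ∂P := by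
  obtain ⟨i₀⟩ := ‹Nonempty ι›
  rw [← hX₀ i₀]
  exact integral_mono (hX.eval i₀) (integrable_iSup hX)
    fun ω ↦ le_ciSup (Set.finite_range (X ω)).bddAbove i₀

variable [Nonempty ι] {Z : ι → Ω → ℝ}

lemma sub_exp_le_integral_iSup_of_iIndepFun (hlaw : ∀ i, HasLaw (Z i) (gaussianReal 0 1) P)
    (hindep : iIndepFun Z P) {u : ℝ} (hu : 0 ≤ u) :
    u - √(2 * π) * u * exp ((u + 1) ^ 2 / 2) / Fintype.card ι - 1 ≤ ∫ ω, ⨆ i, Z i ω ∂P := by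
  let i₀ : ι := Classical.arbitrary ι
  have hZ : HasGaussianLaw (fun ω i ↦ Z i ω) P :=
    hindep.hasGaussianLaw fun i ↦ (hlaw i).hasGaussianLaw
  have := hZ.isProbabilityMeasure
  set q := (gaussianReal 0 1).real (Set.Ici u)
  set n := Fintype.card ι
  have habs : ∫ ω, |Z i₀ ω| ∂P ≤ 1 := integral_abs_le_one_of_hasLaw_gaussianReal (hlaw i₀)
  have htail : (√(2 * π))⁻¹ * exp (-(u + 1) ^ 2 / 2) ≤ q :=
    inv_sqrt_two_pi_mul_exp_le_measureReal_Ici hu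
  have hq : 0 < q := lt_of_lt_of_le (by positivity) htail
  have hmiss : (1 - q) ^ n ≤ √(2 * π) * exp ((u + 1) ^ 2 / 2) / n :=
    calc (1 - q) ^ n ≤ 1 / (n * q) := by
          rw [le_div_iff₀ (by positivity)]
          exact one_sub_pow_mul_le_one hq.le measureReal_le_one n
      _ ≤ 1 / (n * ((√(2 * π))⁻¹ * exp (-(u + 1) ^ 2 / 2))) := by gcongr
      _ = √(2 * π) * exp ((u + 1) ^ 2 / 2) / n := by
          rw [neg_div, exp_neg]
          field
  have hmax := mul_measureReal_exists_le_le_integral_iSup_add hZ.integrable hu i₀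
  have hexists : P.real {ω | ∃ i, u ≤ Z i ω} = 1 - (1 - q) ^ n :=
    measureReal_exists_mem_eq_of_iIndepFun hlaw hindep measurableSet_Ici
  rw [hexists] at hmax
  have hloss := mul_le_mul_of_nonneg_left hmiss hu
  have hrw : u * (√(2 * π) * exp ((u + 1) ^ 2 / 2) / n) =
    √(2 * π) * u * exp ((u + 1) ^ 2 / 2) / n := by ring
  linarith

lemma sqrt_add_le_sqrt_add_sqrt {x y : ℝ} (hx : 0 ≤ x) (hy : 0 ≤ y) : √(x + y) ≤ √x + √y := by
  rw [sqrt_le_left (by positivity), add_sq, sq_sqrt hx, sq_sqrt hy]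
  linarith [mul_nonneg (sqrt_nonneg x) (sqrt_nonneg y)]

lemma one_le_log_natCast {n : ℕ} (hn : 3 ≤ n) : 1 ≤ log n := by
  have hlog : log 3 ≤ log n := log_le_log (by norm_num) (by exact_mod_cast hn)
  linarith [log_three_gt_d9]

lemma sqrt_log_sub_le_integral_iSup_of_iIndepFun
    (hlaw : ∀ i, HasLaw (Z i) (gaussianReal 0 1) P) (hindep : iIndepFun Z P)
    (hcard : 3 ≤ Fintype.card ι) :
    √(2 * log (Fintype.card ι)) - √(2 * log (log (Fintype.card ι))) - 6 ≤
      ∫ ω, ⨆ i, Z i ω ∂P := by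
  have hZ : HasGaussianLaw (fun ω i ↦ Z i ω) P :=
    hindep.hasGaussianLaw fun i ↦ (hlaw i).hasGaussianLaw
  set n := Fintype.card ι
  set L := log n
  have hn : (0 : ℝ) < n := by positivity
  have hL₁ : 1 ≤ L := one_le_log_natCast hcard
  have hlogL : 0 ≤ log L := log_nonneg hL₁
  have hlogL' : log L ≤ L - 1 := log_le_sub_one_of_pos (by linarith)
  set r := √(2 * (L - log L))
  have hr : r ^ 2 = 2 * (L - log L) := sq_sqrt (by linarith)
  have hsplit : √(2 * L) ≤ r + √(2 * log L) := by
    convert sqrt_add_le_sqrt_add_sqrt (x := 2 * (L - log L)) (y := 2 * log L) (by linarith)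
      (by linarith) using 2
    ring
  obtain hr₁ | hr₁ := le_total r 1
  · linarith [integral_iSup_nonneg hZ.integrable fun i ↦
      (hlaw i).integral_eq.trans integral_id_gaussianReal]
  have hmax := sub_exp_le_integral_iSup_of_iIndepFun hlaw hindep (sub_nonneg.2 hr₁)
  have hexp : exp ((r - 1 + 1) ^ 2 / 2) = n / L := by
    rw [sub_add_cancel, hr, mul_div_cancel_left₀ _ two_ne_zero, exp_sub, exp_log hn,
      exp_log (by linarith)]
  have hloss : √(2 * π) * (r - 1) * exp ((r - 1 + 1) ^ 2 / 2) / n ≤ 4 := by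
    have hpi : √(2 * π) ≤ 2.6 := by
      rw [sqrt_le_left (by norm_num)]
      linarith [pi_lt_d2]
    have hrL : r - 1 ≤ 1.5 * L := by nlinarith
    calc √(2 * π) * (r - 1) * exp ((r - 1 + 1) ^ 2 / 2) / n
        = √(2 * π) * (r - 1) / L := by
          rw [hexp]
          field
      _ ≤ 2.6 * (1.5 * L) / L := by gcongr
      _ ≤ 4 := by
          rw [mul_div_assoc, mul_div_cancel_right₀ _ (by positivity)]
          norm_num
  linarith

lemma quarter_le_sqrt_log_log_max_three (x : ℝ) : 1 / 4 ≤ √(log (log (max x 3))) := by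
  have hlog : 1.09 ≤ log (max x 3) :=
    calc 1.09 ≤ log 3 := by linarith [log_three_gt_d9]
      _ ≤ log (max x 3) := log_le_log (by norm_num) (le_max_right _ _)
  refine le_sqrt_of_sq_le ?_
  calc (1 / 4) ^ 2 ≤ 1 - (1.09 : ℝ)⁻¹ := by norm_num
    _ ≤ log 1.09 := one_sub_inv_le_log_of_pos (by norm_num)
    _ ≤ log (log (max x 3)) := log_le_log (by norm_num) hlog

theorem sqrt_log_sub_sqrt_log_log_le_integral_iSup_of_iIndepFun
    (hlaw : ∀ i, HasLaw (Z i) (gaussianReal 0 1) P) (hindep : iIndepFun Z P) :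
    √(2 * log (Fintype.card ι)) - 30 * √(log (log (max (Fintype.card ι) 3))) ≤
      ∫ ω, ⨆ i, Z i ω ∂P := by
  have hquarter := quarter_le_sqrt_log_log_max_three (Fintype.card ι)
  obtain hcard | hcard := le_total 3 (Fintype.card ι)
  · have hmax := sqrt_log_sub_le_integral_iSup_of_iIndepFun hlaw hindep hcard
    have htwo : √(2 : ℝ) ≤ 2 := by
      rw [sqrt_le_left] <;> norm_num
    rw [max_eq_left (by exact_mod_cast hcard)] at hquarter ⊢
    rw [sqrt_mul zero_le_two (log (log _))] at hmax
    nlinarith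
  · have hZ : HasGaussianLaw (fun ω i ↦ Z i ω) P :=
      hindep.hasGaussianLaw fun i ↦ (hlaw i).hasGaussianLaw
    have hnonneg := integral_iSup_nonneg hZ.integrable fun i ↦
      (hlaw i).integral_eq.trans integral_id_gaussianReal
    have hsmall : √(2 * log (Fintype.card ι)) ≤ 2 := by
      have hlog : log (Fintype.card ι) ≤ log 3 :=
        log_le_log (by positivity) (by exact_mod_cast hcard)
      rw [sqrt_le_left zero_le_two]
      linarith [log_three_lt_d9]
    linarith

end IndependentStandardGaussians

section GaussianVectors

variable {Ω Ω' ι : Type*} {mΩ : MeasurableSpace Ω} {mΩ' : MeasurableSpace Ω'} {P : Measure Ω}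
  {P' : Measure Ω'}

lemma variance_fun_sub_of_iIndepFun [IsProbabilityMeasure P] {Z : ι → Ω → ℝ}
    (hZ : ∀ i, MemLp (Z i) 2 P) (hindep : iIndepFun Z P) {i j : ι} (hij : i ≠ j) :
    Var[fun ω ↦ Z i ω - Z j ω; P] = Var[Z i; P] + Var[Z j; P] := by
  rw [variance_fun_sub (hZ i) (hZ j), (hindep.indepFun hij).covariance_eq_zero (hZ i) (hZ j),
    mul_zero, sub_zero]

variable [Nonempty ι] {X : Ω → ι → ℝ} {s : ℝ}

lemma sqrt_mul_integral_iSup_le_of_two_mul_le_variance_sub [Finite ι] {Z : ι → Ω' → ℝ}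
    (hlaw : ∀ i, HasLaw (Z i) (gaussianReal 0 1) P') (hindep : iIndepFun Z P')
    (hX : HasGaussianLaw X P) (hX₀ : ∀ i, ∫ ω, X ω i ∂P = 0) (hs : 0 ≤ s)
    (hvar : ∀ i j, i ≠ j → 2 * s ≤ Var[fun ω ↦ X ω i - X ω j; P]) :
    √s * ∫ ω, ⨆ i, Z i ω ∂P' ≤ ∫ ω, ⨆ i, X ω i ∂P := by
  have := Fintype.ofFinite ι
  have hZ : HasGaussianLaw (fun ω i ↦ Z i ω) P' :=
    hindep.hasGaussianLaw fun i ↦ (hlaw i).hasGaussianLaw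
  have := hZ.isProbabilityMeasure
  have hZ₀ (i : ι) : ∫ ω, Z i ω ∂P' = 0 := (hlaw i).integral_eq.trans integral_id_gaussianReal
  have hZ₁ (i : ι) : Var[Z i; P'] = 1 := by
    rw [(hlaw i).variance_eq, variance_id_gaussianReal, NNReal.coe_one]
  have hsZ : HasGaussianLaw (fun ω i ↦ √s * Z i ω) P' := hZ.fun_smul √s
  have hle (i j : ι) :
      Var[fun ω ↦ √s * Z i ω - √s * Z j ω; P'] ≤ Var[fun ω ↦ X ω i - X ω j; P] := by
    obtain rfl | hij := eq_or_ne i j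
    · simp only [sub_self]
      exact (variance_zero P').trans_le (variance_nonneg _ P)
    · simp only [← mul_sub, variance_const_mul, sq_sqrt hs, hZ₁,
        variance_fun_sub_of_iIndepFun (fun i ↦ (hlaw i).hasGaussianLaw.memLp_two) hindep hij]
      linarith [hvar i j hij]
  calc √s * ∫ ω, ⨆ i, Z i ω ∂P'
      = ∫ ω, ⨆ i, √s * Z i ω ∂P' := by
        simp only [← mul_iSup_of_nonneg (sqrt_nonneg s), integral_const_mul]
    _ ≤ ∫ ω, ⨆ i, X ω i ∂P :=
        integral_iSup_le_of_variance_sub_le hX hsZ hX₀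
          (fun i ↦ by rw [integral_const_mul, hZ₀, mul_zero]) hle

theorem lower_bound_on_expectation_of_max_general [Fintype ι]
    (hX : HasGaussianLaw X P) (hX₀ : ∀ i, ∫ ω, X ω i ∂P = 0) (hs : 0 ≤ s)
    (hvar : ∀ i j, i ≠ j → 2 * s ≤ Var[fun ω ↦ X ω i - X ω j; P]) :
    √(2 * s * log (Fintype.card ι)) - 30 * √s * √(log (log (max (Fintype.card ι) 3))) ≤
      ∫ ω, ⨆ i, X ω i ∂P := by
  let μ : Measure (ι → ℝ) := Measure.pi fun _ ↦ gaussianReal 0 1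
  have hlaw (i : ι) : HasLaw (fun z : ι → ℝ ↦ z i) (gaussianReal 0 1) μ :=
    (measurePreserving_eval (fun _ ↦ gaussianReal 0 1) i).hasLaw
  have hindep : iIndepFun (fun i (z : ι → ℝ) ↦ z i) μ := iIndepFun_pi fun _ ↦ aemeasurable_id
  calc √(2 * s * log (Fintype.card ι)) - 30 * √s * √(log (log (max (Fintype.card ι) 3)))
      = √s * (√(2 * log (Fintype.card ι)) - 30 * √(log (log (max (Fintype.card ι) 3)))) := by
        rw [mul_comm 2 s, mul_assoc, sqrt_mul hs]
        ring
    _ ≤ √s * ∫ z, ⨆ i, z i ∂μ := by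
        gcongr
        exact sqrt_log_sub_sqrt_log_log_le_integral_iSup_of_iIndepFun hlaw hindep
    _ ≤ ∫ ω, ⨆ i, X ω i ∂P :=
        sqrt_mul_integral_iSup_le_of_two_mul_le_variance_sub hlaw hindep hX hX₀ hs hvar

end GaussianVectors

namespace IsCenteredGaussianVec

variable {Ω : Type*} [MeasureSpace Ω] {n : ℕ} {X : Fin n → Ω → ℝ} {R : Matrix (Fin n) (Fin n) ℝ}

lemma hasLaw_sum (hX : IsCenteredGaussianVec X R) (a : Fin n → ℝ) :
    HasLaw (fun ω ↦ ∑ i, a i * X i ω) (gaussianReal 0 (∑ i, ∑ j, a i * R i j * a j).toNNReal) ℙ :=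
  ⟨(Finset.measurable_fun_sum _ fun i _ ↦ (hX.1 i).const_mul (a i)).aemeasurable, hX.2.2 a⟩

lemma hasGaussianLaw (hX : IsCenteredGaussianVec X R) : HasGaussianLaw (fun ω i ↦ X i ω) ℙ := by
  have hmeas : Measurable fun ω i ↦ X i ω := measurable_pi_lambda _ hX.1
  refine ⟨isGaussian_of_map_eq_gaussianReal fun L ↦ ?_⟩
  have hL (ω : Ω) : L (fun i ↦ X i ω) = ∑ i, L (Pi.single i 1) * X i ω := by
    conv_lhs => rw [pi_eq_sum_univ' fun i ↦ X i ω]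
    simp only [map_sum, map_smul, smul_eq_mul, mul_comm]
  refine ⟨0, _, .trans ?_ (hX.hasLaw_sum fun i ↦ L (Pi.single i 1)).map_eq⟩
  rw [Measure.map_map L.continuous.measurable hmeas]
  exact congrArg (Measure.map · ℙ) (funext hL)

lemma integral_eq_zero (hX : IsCenteredGaussianVec X R) (i : Fin n) : ∫ ω, X i ω = 0 := by
  have hlaw := hX.hasLaw_sum (Pi.single i 1)
  simpa [Pi.single_apply, integral_id_gaussianReal] using hlaw.integral_eq

lemma two_sub_le_variance_sub (hX : IsCenteredGaussianVec X R) (i j : Fin n) :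
    2 - R i j - R j i ≤ Var[fun ω ↦ X i ω - X j ω] := by
  have hlaw := hX.hasLaw_sum (Pi.single i 1 - Pi.single j 1)
  have hquad : ∑ k, ∑ l, (Pi.single i 1 - Pi.single j 1 : Fin n → ℝ) k * R k l *
      (Pi.single i 1 - Pi.single j 1 : Fin n → ℝ) l = 2 - R i j - R j i := by
    simp only [Pi.sub_apply, Pi.single_apply, sub_mul, ite_mul, one_mul, zero_mul, mul_sub, mul_ite,
      mul_one, mul_zero, Finset.sum_sub_distrib, Finset.sum_ite_eq', Finset.mem_univ, ↓reduceIte,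
      hX.2.1]
    ring
  have hsum : (fun ω ↦ ∑ k, (Pi.single i 1 - Pi.single j 1 : Fin n → ℝ) k * X k ω) =
      fun ω ↦ X i ω - X j ω := by
    ext ω
    simp [sub_mul, Finset.sum_sub_distrib, Pi.single_apply]
  rw [hquad, hsum] at hlaw
  rw [hlaw.variance_eq, variance_id_gaussianReal, coe_toNNReal']
  exact le_max_left _ _

lemma two_mul_one_sub_le_variance_sub (hX : IsCenteredGaussianVec X R) {ρ₀ : ℝ}
    (hR : ∀ i j, i ≠ j → R i j ≤ ρ₀) (i j : Fin n) (hij : i ≠ j) :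
    2 * (1 - ρ₀) ≤ Var[fun ω ↦ X i ω - X j ω] := by
  linarith [hX.two_sub_le_variance_sub i j, hR i j hij, hR j i hij.symm]

end IsCenteredGaussianVec

theorem lower_bound_on_expectation_of_max :
    ∃ c₀ : ℝ, 0 < c₀ ∧
      ∀ (Ω : Type) [MeasureSpace Ω], IsProbabilityMeasure (ℙ : Measure Ω) →
        ∀ (n : ℕ), 2 ≤ n →
          ∀ (X : Fin n → Ω → ℝ) (R : Matrix (Fin n) (Fin n) ℝ) (ρ₀ : ℝ),
            ρ₀ ∈ Set.Ioo (0 : ℝ) 1 →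
            IsCenteredGaussianVec X R →
            (∀ i j, i ≠ j → R i j ≤ ρ₀) →
            Real.sqrt (2 * (1 - ρ₀) * Real.log n)
                - c₀ * Real.sqrt (Real.log (Real.log (max (n : ℝ) 3)))
              ≤ ∫ ω, (⨆ i, X i ω) ∂(ℙ : Measure Ω) := by
  refine ⟨30, by norm_num, fun Ω _ _ n hn X R ρ₀ ⟨hρ₀, hρ₁⟩ hX hR ↦ ?_⟩
  have : NeZero n := ⟨by omega⟩
  have hbound := lower_bound_on_expectation_of_max_general hX.hasGaussianLaw hX.integral_eq_zero
    (sub_nonneg.2 hρ₁.le) (hX.two_mul_one_sub_le_variance_sub hR)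
  rw [Fintype.card_fin] at hbound
  have hsqrt : √(1 - ρ₀) ≤ 1 := sqrt_le_one.2 (by linarith)
  have hloss : 30 * √(1 - ρ₀) * √(log (log (max n 3))) ≤ 30 * √(log (log (max n 3))) := by
    gcongr
    linarith
  linarith
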